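/- arXiv:1704.02246 — 4 statements merged into one kernel-verified Lean document; each statement's English description precedes it below -/
import Mathlib

section
/- Let 0 < β < η and T > 0. Given a locally integrable function ψ : (-∞,T] → ℝ, a locally integrable function φ : (-∞,T] → ℝ satisfies φ(t) - β ∫_t^T e^{-η(s-t)} φ(s) ds = ψ(t) for all t ≤ T if and only if φ(t) = ψ(t) + β ∫_t^T e^{(β-η)(s-t)} ψ(s) ds for all t ≤ T. Moreover, there exist positive constants c₁, c₂ depending only on β, η, T such that c₁ ∫_0^T |φ(t)|² dt ≤ ∫_0^T |ψ(t)|² dt ≤ c₂ ∫_0^T |φ(t)|² dt. -/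
/-!
Both equations have the form `g t = f t + c * ∫ s in t..T, exp (a * (s - t)) * f s`, with
`(a, c) = (-η, -β)` and `(a, c) = (β - η, β)` respectively. Put `F t = ∫ s in t..T, exp (a * s) * f s`.
Since `F` is absolutely continuous with `F' t = -exp (a * t) * f t` almost everywhere, the
derivative of `-exp (-c * t) * F t` is `exp ((a - c) * t) * g t`; integrating it over `[t, T]`
inverts the relation, and the inverse has the same form with `(a, c)` replaced by `(a - c, -c)`
(`volterra_inversion`). The equivalence is this fact used in both directions.

The norm comparison is likewise one estimate used in both directions: the Volterra operator is
bounded on `L²(0, T)`, by the pointwise bound of the kernel and Cauchy–Schwarz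
(`volterra_sq_bound`). In particular `φ` is square integrable on `[0, T]` iff `ψ` is; when
they are not, both integrals of squares take the junk value `0` and the inequalities are trivial.
-/

open MeasureTheory

lemma intervalIntegrable_of_locallyIntegrableOn_Iic {f : ℝ → ℝ} {T t : ℝ}
    (hf : LocallyIntegrableOn f (Set.Iic T) volume) (ht : t ≤ T) :
    IntervalIntegrable f volume t T := by
  rw [intervalIntegrable_iff_integrableOn_Icc_of_le ht]
  exact hf.integrableOn_compact_subset Set.Icc_subset_Iic_self isCompact_Icc

lemma volterra_integral_factor (f : ℝ → ℝ) (a t T : ℝ) :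
    ∫ s in t..T, Real.exp (a * (s - t)) * f s
      = Real.exp (-a * t) * ∫ s in t..T, Real.exp (a * s) * f s := by
  rw [← intervalIntegral.integral_const_mul]
  congr 1
  ext s
  rw [← mul_assoc, ← Real.exp_add]
  ring_nf

/-- Inversion of the Volterra operator `f ↦ f + c ∫_t^T exp (a (s - t)) f(s) ds`: the inverse is
the operator of the same kind with parameters `(a - c, -c)`. -/
lemma volterra_inversion {f g : ℝ → ℝ} {a c T : ℝ}
    (hf : LocallyIntegrableOn f (Set.Iic T) volume)
    (h : ∀ t ≤ T, g t = f t + c * ∫ s in t..T, Real.exp (a * (s - t)) * f s) :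
    ∀ t ≤ T, f t = g t + (-c) * ∫ s in t..T, Real.exp ((a - c) * (s - t)) * g s := by
  intro t ht
  have hu : IntervalIntegrable (fun s => Real.exp (a * s) * f s) volume t T :=
    (intervalIntegrable_of_locallyIntegrableOn_Iic hf ht).continuousOn_mul
      (by fun_prop)
  set G : ℝ → ℝ := fun x => ∫ s in T..x, Real.exp (a * s) * f s with hG
  have hGac : AbsolutelyContinuousOnInterval G t T :=
    hu.absolutelyContinuousOnInterval_intervalIntegral (by simp)
  have hEac : AbsolutelyContinuousOnInterval (fun x : ℝ => Real.exp (-c * x)) t T :=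
    ContDiffOn.absolutelyContinuousOnInterval (by fun_prop)
  -- `G` is the negative of `∫_x^T`, so `exp (-c x) G x` has derivative `exp ((a - c) x) g x`.
  have hFTC := (hEac.fun_mul hGac).integral_deriv_eq_sub
  have hderiv : ∫ x in t..T, deriv (fun x => Real.exp (-c * x) * G x) x
      = ∫ x in t..T, Real.exp ((a - c) * x) * g x := by
    apply intervalIntegral.integral_congr_ae
    filter_upwards [hu.ae_hasDerivAt_integral] with x hx hxt
    have hx1 : HasDerivAt G (Real.exp (a * x) * f x) x :=
      hx (Set.uIoc_subset_uIcc hxt) T (by simp)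
    have hx2 : HasDerivAt (fun x : ℝ => Real.exp (-c * x)) (Real.exp (-c * x) * (-c)) x := by
      simpa using ((hasDerivAt_id x).const_mul (-c)).exp
    rw [(hx2.fun_mul hx1).deriv]
    rw [Set.uIoc_of_le ht] at hxt
    rw [h x hxt.2, volterra_integral_factor, intervalIntegral.integral_symm T x]
    have e1 : Real.exp ((a - c) * x) = Real.exp (-c * x) * Real.exp (a * x) := by
      rw [← Real.exp_add]; ring_nf
    have e2 : Real.exp (a * x) * Real.exp (-a * x) = 1 := by
      rw [← Real.exp_add]; simp
    rw [e1]
    linear_combination (Real.exp (-c * x) * c * G x) * e2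
  have hGT : G T = 0 := by simp [hG]
  rw [hderiv, hGT] at hFTC
  rw [h t ht, volterra_integral_factor f, volterra_integral_factor g, hFTC,
    intervalIntegral.integral_symm T t]
  have e3 : Real.exp (-(a - c) * t) * Real.exp (-c * t) = Real.exp (-a * t) := by
    rw [← Real.exp_add]; ring_nf
  change f t = f t + c * (_ * -G t) + _
  linear_combination (-c * G t) * e3

/-- Cauchy–Schwarz against the constant function `1`. -/
lemma sq_integral_abs_le {f : ℝ → ℝ} {T : ℝ} (hT : 0 < T)
    (hf : IntervalIntegrable f volume 0 T)
    (hf2 : IntervalIntegrable (fun t => f t ^ 2) volume 0 T) :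
    (∫ s in (0 : ℝ)..T, |f s|) ^ 2 ≤ T * ∫ s in (0 : ℝ)..T, f s ^ 2 := by
  set I := ∫ s in (0 : ℝ)..T, |f s| with hI
  -- The mean square deviation of `|f|` from its average `I / T` is nonnegative.
  have h0 : 0 ≤ ∫ s in (0 : ℝ)..T, (f s ^ 2 - 2 * (I / T) * |f s| + (I / T) ^ 2) := by
    apply intervalIntegral.integral_nonneg hT.le
    intro s _
    nlinarith [sq_nonneg (|f s| - I / T), sq_abs (f s)]
  rw [intervalIntegral.integral_add (hf2.sub (hf.abs.const_mul _)) (by simp),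
    intervalIntegral.integral_sub hf2 (hf.abs.const_mul _),
    intervalIntegral.integral_const_mul, intervalIntegral.integral_const, ← hI] at h0
  have h1 := mul_nonneg hT.le h0
  have h2 : T * ((∫ s in (0 : ℝ)..T, f s ^ 2) - 2 * (I / T) * I + (T - 0) • (I / T) ^ 2)
      = T * (∫ s in (0 : ℝ)..T, f s ^ 2) - I ^ 2 := by
    rw [smul_eq_mul]
    field_simp
    ring
  linarith

/-- The Volterra operator is bounded on `L²(0, T)`, with a bound depending only on `a`, `c`, `T`. -/
lemma volterra_sq_bound {f g : ℝ → ℝ} {a c T : ℝ} (hT : 0 < T)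
    (hf : LocallyIntegrableOn f (Set.Iic T) volume)
    (hg : LocallyIntegrableOn g (Set.Iic T) volume)
    (h : ∀ t ≤ T, g t = f t + c * ∫ s in t..T, Real.exp (a * (s - t)) * f s)
    (hf2 : IntervalIntegrable (fun t => f t ^ 2) volume 0 T) :
    IntervalIntegrable (fun t => g t ^ 2) volume 0 T ∧
      ∫ t in (0 : ℝ)..T, g t ^ 2
        ≤ (2 + 2 * (c * Real.exp (|a| * T)) ^ 2 * T ^ 2) * ∫ t in (0 : ℝ)..T, f t ^ 2 := by
  have hfi := intervalIntegrable_of_locallyIntegrableOn_Iic hf hT.le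
  have hgi := intervalIntegrable_of_locallyIntegrableOn_Iic hg hT.le
  set I := ∫ s in (0 : ℝ)..T, |f s| with hI
  have hCS : I ^ 2 ≤ T * ∫ s in (0 : ℝ)..T, f s ^ 2 := sq_integral_abs_le hT hfi hf2
  have hker : ∀ t ∈ Set.Icc 0 T,
      |∫ s in t..T, Real.exp (a * (s - t)) * f s| ≤ Real.exp (|a| * T) * I := by
    intro t ht
    have hft := intervalIntegrable_of_locallyIntegrableOn_Iic hf ht.2
    calc |∫ s in t..T, Real.exp (a * (s - t)) * f s|
        ≤ ∫ s in t..T, |Real.exp (a * (s - t)) * f s| :=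
          intervalIntegral.abs_integral_le_integral_abs ht.2
      _ ≤ ∫ s in t..T, Real.exp (|a| * T) * |f s| := by
          apply intervalIntegral.integral_mono_on ht.2
            (hft.continuousOn_mul (by fun_prop)).abs (hft.abs.const_mul _)
          intro s hs
          rw [abs_mul, Real.abs_exp]
          refine mul_le_mul_of_nonneg_right (Real.exp_le_exp.2 ?_) (abs_nonneg _)
          calc a * (s - t) ≤ |a| * (s - t) :=
                mul_le_mul_of_nonneg_right (le_abs_self a) (by linarith [hs.1])
            _ ≤ |a| * T :=
                mul_le_mul_of_nonneg_left (by linarith [hs.2, ht.1]) (abs_nonneg a)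
      _ = Real.exp (|a| * T) * ∫ s in t..T, |f s| := intervalIntegral.integral_const_mul _ _
      _ ≤ Real.exp (|a| * T) * I := by
          gcongr
          exact intervalIntegral.integral_mono_interval ht.1 ht.2 le_rfl
            (Filter.Eventually.of_forall fun s => abs_nonneg (f s)) hfi.abs
  have hpt : ∀ t ∈ Set.Icc 0 T,
      g t ^ 2 ≤ 2 * f t ^ 2 + 2 * (c * Real.exp (|a| * T)) ^ 2 * I ^ 2 := by
    intro t ht
    have h1 : (∫ s in t..T, Real.exp (a * (s - t)) * f s) ^ 2
        ≤ (Real.exp (|a| * T) * I) ^ 2 :=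
      sq_le_sq.2 ((hker t ht).trans (le_abs_self _))
    rw [h t ht.2]
    nlinarith [sq_nonneg (f t - c * ∫ s in t..T, Real.exp (a * (s - t)) * f s),
      mul_le_mul_of_nonneg_left h1 (sq_nonneg c)]
  have hdom : IntervalIntegrable
      (fun t => 2 * f t ^ 2 + 2 * (c * Real.exp (|a| * T)) ^ 2 * I ^ 2) volume 0 T :=
    (hf2.const_mul 2).add (by simp)
  have hg2 : IntervalIntegrable (fun t => g t ^ 2) volume 0 T := by
    refine hdom.mono_fun' (hgi.def'.aestronglyMeasurable.pow 2) ?_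
    filter_upwards [ae_restrict_mem measurableSet_uIoc] with t ht
    rw [Set.uIoc_of_le hT.le] at ht
    rw [Real.norm_of_nonneg (sq_nonneg _)]
    exact hpt t ⟨ht.1.le, ht.2⟩
  refine ⟨hg2, (intervalIntegral.integral_mono_on hT.le hg2 hdom hpt).trans ?_⟩
  rw [intervalIntegral.integral_add (hf2.const_mul 2) (by simp),
    intervalIntegral.integral_const_mul, intervalIntegral.integral_const, smul_eq_mul]
  nlinarith [mul_le_mul_of_nonneg_left hCS
    (mul_nonneg hT.le (sq_nonneg (c * Real.exp (|a| * T))))]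

/-- For `0 < β < η`, `T > 0`: a locally integrable `φ` solves
`φ(t) - β ∫_t^T e^{-η(s-t)} φ(s) ds = ψ(t)` for all `t ≤ T` iff
`φ(t) = ψ(t) + β ∫_t^T e^{(β-η)(s-t)} ψ(s) ds` for all `t ≤ T`; moreover there are
positive constants `c₁, c₂` depending only on `β, η, T` such that
`c₁ ∫_0^T φ² ≤ ∫_0^T ψ² ≤ c₂ ∫_0^T φ²`. -/
theorem stmt_1 (β η T : ℝ) (hβ : 0 < β) (hβη : β < η) (hT : 0 < T) :
    (∀ φ ψ : ℝ → ℝ,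
      LocallyIntegrableOn φ (Set.Iic T) volume →
      LocallyIntegrableOn ψ (Set.Iic T) volume →
      ((∀ t ≤ T, φ t - β * ∫ s in t..T, Real.exp (-η * (s - t)) * φ s = ψ t) ↔
        (∀ t ≤ T, φ t = ψ t + β * ∫ s in t..T, Real.exp ((β - η) * (s - t)) * ψ s)))
    ∧ ∃ c₁ > (0:ℝ), ∃ c₂ > (0:ℝ), ∀ φ ψ : ℝ → ℝ,
        LocallyIntegrableOn φ (Set.Iic T) volume →
        LocallyIntegrableOn ψ (Set.Iic T) volume →
        (∀ t ≤ T, φ t - β * ∫ s in t..T, Real.exp (-η * (s - t)) * φ s = ψ t) →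
        c₁ * (∫ t in (0:ℝ)..T, (φ t) ^ 2) ≤ (∫ t in (0:ℝ)..T, (ψ t) ^ 2) ∧
        (∫ t in (0:ℝ)..T, (ψ t) ^ 2) ≤ c₂ * (∫ t in (0:ℝ)..T, (φ t) ^ 2) := by
  have key : ∀ φ ψ : ℝ → ℝ,
      LocallyIntegrableOn φ (Set.Iic T) volume →
      LocallyIntegrableOn ψ (Set.Iic T) volume →
      ((∀ t ≤ T, φ t - β * ∫ s in t..T, Real.exp (-η * (s - t)) * φ s = ψ t) ↔
        (∀ t ≤ T, φ t = ψ t + β * ∫ s in t..T, Real.exp ((β - η) * (s - t)) * ψ s)) := by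
    intro φ ψ hφ hψ
    constructor
    · intro h
      have := volterra_inversion (g := ψ) (a := -η) (c := -β) hφ
        (fun t ht => by rw [← h t ht]; ring)
      rwa [neg_neg, show -η - -β = β - η by ring] at this
    · intro h t ht
      have := volterra_inversion hψ h t ht
      rw [show β - η - β = -η by ring] at this
      linarith
  refine ⟨key, (2 + 2 * (β * Real.exp (|β - η| * T)) ^ 2 * T ^ 2)⁻¹, by positivity,
    2 + 2 * (-β * Real.exp (|-η| * T)) ^ 2 * T ^ 2, by positivity, ?_⟩
  intro φ ψ hφ hψ h
  have h1 : ∀ t ≤ T, ψ t = φ t + (-β) * ∫ s in t..T, Real.exp (-η * (s - t)) * φ s :=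
    fun t ht => by rw [← h t ht]; ring
  have h2 := (key φ ψ hφ hψ).1 h
  by_cases hφ2 : IntervalIntegrable (fun t => φ t ^ 2) volume 0 T
  · obtain ⟨hψ2, hle⟩ := volterra_sq_bound hT hφ hψ h1 hφ2
    refine ⟨?_, hle⟩
    rw [inv_mul_le_iff₀ (by positivity)]
    exact (volterra_sq_bound hT hψ hφ h2 hψ2).2
  · -- Neither function is square integrable, so both integrals are `0` by convention.
    have hψ2 : ¬ IntervalIntegrable (fun t => ψ t ^ 2) volume 0 T :=
      fun hc => hφ2 (volterra_sq_bound hT hψ hφ h2 hc).1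
    rw [intervalIntegral.integral_undef hφ2, intervalIntegral.integral_undef hψ2]
    simp
end

section
/- Given real numbers λ, β, η, b and a real number a ≠ 0, a pair (f, g) of smooth real-valued functions on [0,∞) solves the system f''(t) + λ f(t) - λβ ∫_0^t e^{-η(t-s)} f(s) ds + a g(t) = 0 and g''(t) + λ g(t) + b f(t) = 0 for all t ≥ 0 if and only if all of the following hold: (1) f satisfies the fifth-order ODE f⁽⁵⁾ + η f⁽⁴⁾ + 2λ f''' + λ(2η - β) f'' + (λ² - ab) f' + (λ²(η - β) - η ab) f = 0 on [0,∞); (2) f⁽⁴⁾(0) = -2λ f''(0) + λβ f'(0) + (ab - ηλβ - λ²) f(0); (3) g(t) = -(1/a) ( f''(t) + λ f(t) - λβ ∫_0^t e^{-η(t-s)} f(s) ds ) for all t ≥ 0. -/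
/-!
Write `I t` for the memory integral and `D = f'' + lmb f - lmb β I + a g` for the left-hand side of
the first equation. Since `I' = f - η I`, differentiating `D` twice shows that

  `D'' + lmb D - a (g'' + lmb g + b f) = E`,

where `E = f⁽⁴⁾ + 2 lmb f'' - lmb β f' + (lmb η β + lmb² - a b) f - lmb β (η² + lmb) I`
involves `f` only. So once `D = 0` on `[0, ∞)` (which is the formula recovering `g`), the second
equation is equivalent to `E = 0` on `[0, ∞)`. As `I' + η I = f`, the combination `E' + η E` no
longer contains the integral: it is the left-hand side of the fifth-order equation. Hence `E = 0`
on `[0, ∞)` iff the fifth-order equation holds and `E 0 = 0`, and the latter is the compatibility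
condition because `I 0 = 0`.

Functions are only known to vanish on `[0, ∞)`, so derivatives at `0` are handled by uniqueness
of one-sided derivatives (`deriv_zero_of_zero_on`); the converse integrates `E' + η E = 0`
with the factor `exp (η t)` (`zero_of_linear_ode`).
-/

open MeasureTheory

theorem deriv_zero_of_zero_on {u u' : ℝ → ℝ} (hu : ∀ t, HasDerivAt u (u' t) t)
    (h0 : ∀ t, 0 ≤ t → u t = 0) (t : ℝ) (ht : 0 ≤ t) : u' t = 0 := by
  have h1 : HasDerivWithinAt u (u' t) (Set.Ici t) t := (hu t).hasDerivWithinAt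
  have h2 : HasDerivWithinAt u 0 (Set.Ici t) t :=
    (hasDerivWithinAt_const t (Set.Ici t) (0 : ℝ)).congr
      (fun x hx => h0 x (ht.trans hx)) (h0 t ht)
  exact (uniqueDiffWithinAt_Ici t).eq_deriv _ h1 h2

theorem zero_of_linear_ode {η : ℝ} {u u' : ℝ → ℝ} (hu : ∀ t, HasDerivAt u (u' t) t)
    (hode : ∀ t, 0 ≤ t → u' t + η * u t = 0) (h0 : u 0 = 0) (t : ℝ) (ht : 0 ≤ t) :
    u t = 0 := by
  have hd : ∀ x, HasDerivAt (fun x => Real.exp (η * x) * u x)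
      (Real.exp (η * x) * (u' x + η * u x)) x := by
    intro x
    have h1 : HasDerivAt (fun x => η * x) (η * 1) x := (hasDerivAt_id x).const_mul η
    exact (h1.exp.mul (hu x)).congr_deriv (by ring)
  have hc := constant_of_has_deriv_right_zero (f := fun x => Real.exp (η * x) * u x)
    (a := 0) (b := t) (fun x _ => (hd x).continuousAt.continuousWithinAt)
    (fun x hx => by
      have := (hd x).hasDerivWithinAt (s := Set.Ici x)
      rwa [hode x hx.1, mul_zero] at this) t ⟨ht, le_rfl⟩
  simpa [h0] using hc

/-- The memory integral solves `I' = f - η I`. -/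
theorem hasDerivAt_memory (η : ℝ) {f : ℝ → ℝ} (hf : Continuous f) (t : ℝ) :
    HasDerivAt (fun t => ∫ s in (0:ℝ)..t, Real.exp (-η * (t - s)) * f s)
      (f t - η * ∫ s in (0:ℝ)..t, Real.exp (-η * (t - s)) * f s) t := by
  -- Splitting the kernel moves the dependence on `t` out of the integrand.
  have key : ∀ t : ℝ, (∫ s in (0:ℝ)..t, Real.exp (-η * (t - s)) * f s)
      = Real.exp (-η * t) * ∫ s in (0:ℝ)..t, Real.exp (η * s) * f s := by
    intro t
    rw [← intervalIntegral.integral_const_mul]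
    congr 1
    ext s
    rw [← mul_assoc, ← Real.exp_add]
    congr 2
    ring
  have hcont : Continuous fun s => Real.exp (η * s) * f s := by fun_prop
  have h1 : HasDerivAt (fun x => -η * x) (-η * 1) t := (hasDerivAt_id t).const_mul (-η)
  have h2 := h1.exp.mul (hcont.integral_hasStrictDerivAt 0 t).hasDerivAt
  simp only [key]
  refine h2.congr_deriv ?_
  rw [← mul_assoc (Real.exp (-η * t)) (Real.exp (η * t)), ← Real.exp_add]
  have : -η * t + η * t = 0 := by ring
  rw [this, Real.exp_zero]
  ring

theorem hasDerivAt_iteratedDeriv_of_contDiff {n : ℕ} {f : ℝ → ℝ} (hf : ContDiff ℝ n f) {k : ℕ}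
    (hk : k < n) (t : ℝ) : HasDerivAt (iteratedDeriv k f) (iteratedDeriv (k + 1) f t) t := by
  rw [iteratedDeriv_succ]
  exact (hf.differentiable_iteratedDeriv k (by exact_mod_cast hk) t).hasDerivAt

/-- For `λ, β, η, b ∈ ℝ`, `a ≠ 0`: a pair `(f, g)` of smooth functions solves the
coupled system with memory on `[0,∞)` iff `f` solves the fifth-order ODE, the
compatibility condition at `0` holds, and `g` is recovered from `f` by the stated
formula. -/
theorem stmt_2 (lmb β η a b : ℝ) (ha : a ≠ 0) (f g : ℝ → ℝ)
    (hf : ContDiff ℝ 5 f) (hg : ContDiff ℝ 2 g) :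
    (∀ t : ℝ, 0 ≤ t →
      (iteratedDeriv 2 f t + lmb * f t
          - lmb * β * (∫ s in (0:ℝ)..t, Real.exp (-η * (t - s)) * f s) + a * g t = 0 ∧
        iteratedDeriv 2 g t + lmb * g t + b * f t = 0)) ↔
      ((∀ t : ℝ, 0 ≤ t →
          iteratedDeriv 5 f t + η * iteratedDeriv 4 f t + 2 * lmb * iteratedDeriv 3 f t
            + lmb * (2 * η - β) * iteratedDeriv 2 f t + (lmb ^ 2 - a * b) * deriv f t
            + (lmb ^ 2 * (η - β) - η * a * b) * f t = 0)
        ∧ iteratedDeriv 4 f 0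
            = -2 * lmb * iteratedDeriv 2 f 0 + lmb * β * deriv f 0
              + (a * b - η * lmb * β - lmb ^ 2) * f 0
        ∧ ∀ t : ℝ, 0 ≤ t →
            g t = -(1 / a) * (iteratedDeriv 2 f t + lmb * f t
              - lmb * β * ∫ s in (0:ℝ)..t, Real.exp (-η * (t - s)) * f s)) := by
  have F0 : ∀ t, HasDerivAt f (deriv f t) t := fun t =>
    (hf.differentiable (by norm_num) t).hasDerivAt
  have F1 : ∀ t, HasDerivAt (deriv f) (iteratedDeriv 2 f t) t := by
    intro t
    simpa only [iteratedDeriv_one] using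
      hasDerivAt_iteratedDeriv_of_contDiff (n := 5) hf (k := 1) (by norm_num) t
  have F2 : ∀ t, HasDerivAt (iteratedDeriv 2 f) (iteratedDeriv 3 f t) t :=
    hasDerivAt_iteratedDeriv_of_contDiff (n := 5) hf (by norm_num)
  have F3 : ∀ t, HasDerivAt (iteratedDeriv 3 f) (iteratedDeriv 4 f t) t :=
    hasDerivAt_iteratedDeriv_of_contDiff (n := 5) hf (by norm_num)
  have F4 : ∀ t, HasDerivAt (iteratedDeriv 4 f) (iteratedDeriv 5 f t) t :=
    hasDerivAt_iteratedDeriv_of_contDiff (n := 5) hf (by norm_num)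
  have G0 : ∀ t, HasDerivAt g (deriv g t) t := fun t =>
    (hg.differentiable (by norm_num) t).hasDerivAt
  have G1 : ∀ t, HasDerivAt (deriv g) (iteratedDeriv 2 g t) t := by
    intro t
    simpa only [iteratedDeriv_one] using
      hasDerivAt_iteratedDeriv_of_contDiff (n := 2) hg (k := 1) (by norm_num) t
  have HI := hasDerivAt_memory η hf.continuous
  have I0 : (∫ s in (0:ℝ)..0, Real.exp (-η * (0 - s)) * f s) = 0 :=
    intervalIntegral.integral_same
  -- From here on only `I' = f - η I` and `I 0 = 0` are needed.
  generalize hI : (fun t : ℝ => ∫ s in (0:ℝ)..t, Real.exp (-η * (t - s)) * f s) = I at HI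
  have hI' : ∀ t : ℝ, (∫ s in (0:ℝ)..t, Real.exp (-η * (t - s)) * f s) = I t :=
    fun t => congrFun hI t
  rw [hI' 0] at I0
  simp only [hI'] at HI ⊢
  have D0 : ∀ t, HasDerivAt
      (fun t => iteratedDeriv 2 f t + lmb * f t - lmb * β * I t + a * g t)
      (iteratedDeriv 3 f t + lmb * deriv f t - lmb * β * (f t - η * I t) + a * deriv g t) t :=
    fun t => (((F2 t).add ((F0 t).const_mul lmb)).sub ((HI t).const_mul (lmb * β))).add
      ((G0 t).const_mul a)
  have D1 : ∀ t, HasDerivAt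
      (fun t => iteratedDeriv 3 f t + lmb * deriv f t - lmb * β * (f t - η * I t) + a * deriv g t)
      (iteratedDeriv 4 f t + lmb * iteratedDeriv 2 f t
        - lmb * β * (deriv f t - η * (f t - η * I t)) + a * iteratedDeriv 2 g t) t :=
    fun t => (((F3 t).add ((F1 t).const_mul lmb)).sub
      (((F0 t).sub ((HI t).const_mul η)).const_mul (lmb * β))).add ((G1 t).const_mul a)
  have E0 : ∀ t, HasDerivAt
      (fun t => iteratedDeriv 4 f t + 2 * lmb * iteratedDeriv 2 f t - lmb * β * deriv f t
        + (lmb * η * β + lmb ^ 2 - a * b) * f t - lmb * β * (η ^ 2 + lmb) * I t)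
      (iteratedDeriv 5 f t + 2 * lmb * iteratedDeriv 3 f t - lmb * β * iteratedDeriv 2 f t
        + (lmb * η * β + lmb ^ 2 - a * b) * deriv f t
        - lmb * β * (η ^ 2 + lmb) * (f t - η * I t)) t :=
    fun t => ((((F4 t).add ((F2 t).const_mul (2 * lmb))).sub ((F1 t).const_mul (lmb * β))).add
      ((F0 t).const_mul (lmb * η * β + lmb ^ 2 - a * b))).sub
      ((HI t).const_mul (lmb * β * (η ^ 2 + lmb)))
  constructor
  · intro h
    have hD1 := deriv_zero_of_zero_on D0 fun t ht => (h t ht).1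
    have hD2 := deriv_zero_of_zero_on D1 hD1
    have hE : ∀ t, 0 ≤ t → iteratedDeriv 4 f t + 2 * lmb * iteratedDeriv 2 f t
        - lmb * β * deriv f t + (lmb * η * β + lmb ^ 2 - a * b) * f t
        - lmb * β * (η ^ 2 + lmb) * I t = 0 := by
      intro t ht
      linear_combination hD2 t ht + lmb * (h t ht).1 - a * (h t ht).2
    have hE1 := deriv_zero_of_zero_on E0 hE
    refine ⟨fun t ht => ?_, ?_, fun t ht => ?_⟩
    · linear_combination hE1 t ht + η * hE t ht
    · linear_combination hE 0 le_rfl + lmb * β * (η ^ 2 + lmb) * I0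
    · field_simp
      linear_combination (h t ht).1
  · rintro ⟨hode, hinit, hrec⟩
    have hD : ∀ t, 0 ≤ t →
        iteratedDeriv 2 f t + lmb * f t - lmb * β * I t + a * g t = 0 := by
      intro t ht
      rw [hrec t ht]
      field_simp
      ring
    have hD2 := deriv_zero_of_zero_on D1 (deriv_zero_of_zero_on D0 hD)
    have hE := zero_of_linear_ode (η := η) E0
      (fun t ht => by linear_combination hode t ht)
      (by linear_combination hinit - lmb * β * (η ^ 2 + lmb) * I0)
    refine fun t ht => ⟨hD t ht, mul_left_cancel₀ ha ?_⟩
    linear_combination hD2 t ht + lmb * hD t ht - hE t ht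
end

section
/- Given real numbers λ, β, η and a continuous function h : ℝ → ℝ, if g : ℝ → ℝ is of class C³ and satisfies g''' + η g'' + λ g' + λ(η - β) g = h on ℝ, then for every t ∈ ℝ one has g''(t) + λ g(t) - λβ ∫_0^t e^{-η(t-s)} g(s) ds = e^{-ηt} ( g''(0) + λ g(0) ) + ∫_0^t e^{-η(t-s)} h(s) ds. -/
open MeasureTheory

/-!
With `F = g'' + λ g`, the equation reads `F' + η F = h + λβ g`. Hence, for fixed `t`, the function
`s ↦ e^{-η(t-s)} F(s)` has derivative `e^{-η(t-s)} (λβ g(s) + h(s))`, and integrating from `0` to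
`t` gives the identity. The `C³` hypothesis is what makes `F` differentiable.
-/

/-- If `g ∈ C³(ℝ)` solves `g''' + η g'' + λ g' + λ(η-β) g = h` with `h` continuous,
then `g'' + λ g - λβ ∫_0^t e^{-η(t-s)} g(s) ds
  = e^{-ηt}(g''(0) + λ g(0)) + ∫_0^t e^{-η(t-s)} h(s) ds` for every `t ∈ ℝ`. -/
theorem stmt_3 (lmb β η : ℝ) (h : ℝ → ℝ) (hh : Continuous h) (g : ℝ → ℝ)
    (hg : ContDiff ℝ 3 g)
    (heq : ∀ t : ℝ,
      iteratedDeriv 3 g t + η * iteratedDeriv 2 g t + lmb * deriv g t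
        + lmb * (η - β) * g t = h t) :
    ∀ t : ℝ,
      iteratedDeriv 2 g t + lmb * g t
          - lmb * β * ∫ s in (0:ℝ)..t, Real.exp (-η * (t - s)) * g s
        = Real.exp (-η * t) * (iteratedDeriv 2 g 0 + lmb * g 0)
          + ∫ s in (0:ℝ)..t, Real.exp (-η * (t - s)) * h s := by
  intro t
  have hcg : Continuous g := hg.continuous
  have hd0 : ∀ s, HasDerivAt g (deriv g s) s := fun s =>
    (hg.differentiable (by norm_num) s).hasDerivAt
  have hd2 : ∀ s, HasDerivAt (iteratedDeriv 2 g) (iteratedDeriv 3 g s) s := fun s => by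
    rw [iteratedDeriv_succ (n := 2)]
    exact (hg.differentiable_iteratedDeriv 2 (by norm_num) s).hasDerivAt
  have hE : ∀ s, HasDerivAt (fun s => Real.exp (-η * (t - s)))
      (Real.exp (-η * (t - s)) * η) s := fun s => by
    have h1 : HasDerivAt (fun s => -η * (t - s)) η s := by
      simpa using ((hasDerivAt_id s).const_sub t).const_mul (-η)
    exact h1.exp
  have hF : ∀ s, HasDerivAt
      (fun s => Real.exp (-η * (t - s)) * (iteratedDeriv 2 g s + lmb * g s))
      (lmb * β * (Real.exp (-η * (t - s)) * g s) + Real.exp (-η * (t - s)) * h s) s := fun s => by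
    refine ((hE s).mul ((hd2 s).add ((hd0 s).const_mul lmb))).congr_deriv ?_
    rw [← heq s]
    simp only [Pi.add_apply]
    ring
  have hig : Continuous fun s => lmb * β * (Real.exp (-η * (t - s)) * g s) := by fun_prop
  have hih : Continuous fun s => Real.exp (-η * (t - s)) * h s := by fun_prop
  have key := intervalIntegral.integral_eq_sub_of_hasDerivAt (a := 0) (b := t)
    (fun s _ => hF s) ((hig.add hih).intervalIntegrable 0 t)
  rw [intervalIntegral.integral_add (hig.intervalIntegrable 0 t) (hih.intervalIntegrable 0 t),
    intervalIntegral.integral_const_mul] at key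
  simp only [sub_self, mul_zero, Real.exp_zero, one_mul, sub_zero] at key
  linarith
end

section
/- Let T > 0 and let z₁, z₂, w₁, w₂ ∈ ℂ be such that T²(w₁+w₂)² ≠ π² and T²(w₁ - conj(w₂))² ≠ π². Then ∫_0^T sin(πt/T) · Re(z₁ e^{i w₁ t}) · Re(z₂ e^{i w₂ t}) dt = (1/2) Re( z₁ z₂ (1 + e^{i(w₁+w₂)T}) K(w₁+w₂) + z₁ conj(z₂) (1 + e^{i(w₁ - conj(w₂))T}) K(w₁ - conj(w₂)) ). -/
/-!
The product of two real parts is `Re a * Re b = ½ Re (a b + a conj b)`. With `a = z₁ e^{iw₁t}` and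
`b = z₂ e^{iw₂t}`, both `a b` and `a conj b` are constant multiples of a single exponential, of
frequency `w₁ + w₂` and `w₁ - conj w₂` respectively. Since `Re` commutes with the integral, the
claim reduces to `∫₀ᵀ sin(πt/T) e^{iwt} dt = (1 + e^{iwT}) K(w)` (`integral_sin_mul_cexp`), which
follows from an explicit antiderivative.
-/


open MeasureTheory

/-- The kernel `K(w) = Tπ/(π² - T²w²)`. -/
noncomputable def Kker (T : ℝ) (w : ℂ) : ℂ :=
  (T : ℂ) * (Real.pi : ℂ) / ((Real.pi : ℂ) ^ 2 - (T : ℂ) ^ 2 * w ^ 2)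

/-- The half-sine window has Fourier-Laplace transform `(1 + e^{iwT}) K(w)` away from the poles. -/
lemma integral_sin_mul_cexp (T : ℝ) (hT : 0 < T) (w : ℂ)
    (h : (T : ℂ) ^ 2 * w ^ 2 ≠ (Real.pi : ℂ) ^ 2) :
    (∫ t in (0:ℝ)..T, (Real.sin (Real.pi * t / T) : ℂ) * Complex.exp (Complex.I * w * (t : ℂ)))
      = (1 + Complex.exp (Complex.I * w * (T : ℂ))) * Kker T w := by
  have hD : (Real.pi : ℂ) ^ 2 - (T : ℂ) ^ 2 * w ^ 2 ≠ 0 := sub_ne_zero.mpr h.symm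
  have hT' : (T : ℂ) ≠ 0 := by exact_mod_cast hT.ne'
  -- The antiderivative has the form `e^{iwt} (α sin(πt/T) + β cos(πt/T))`; comparing coefficients
  -- of sine and cosine gives `α = iwT²/D` and `β = -Tπ/D` with `D = π² - T²w²`.
  have hderiv : ∀ t ∈ Set.uIcc (0:ℝ) T, HasDerivAt
      (fun t : ℝ => Complex.exp (Complex.I * w * (t : ℂ)) *
        (Complex.I * w * (T : ℂ) ^ 2 * (Real.sin (Real.pi * t / T) : ℂ)
          - (T : ℂ) * (Real.pi : ℂ) * (Real.cos (Real.pi * t / T) : ℂ))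
        / ((Real.pi : ℂ) ^ 2 - (T : ℂ) ^ 2 * w ^ 2))
      ((Real.sin (Real.pi * t / T) : ℂ) * Complex.exp (Complex.I * w * (t : ℂ))) t := by
    intro t _
    have hlin : HasDerivAt (fun t : ℝ => Real.pi * t / T) (Real.pi * 1 / T) t :=
      ((hasDerivAt_id t).const_mul Real.pi).div_const T
    have hs := hlin.sin.ofReal_comp
    have hc := hlin.cos.ofReal_comp
    have he := (((hasDerivAt_id t).ofReal_comp).const_mul (Complex.I * w)).cexp
    have hF := (he.mul ((hs.const_mul (Complex.I * w * (T : ℂ) ^ 2)).sub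
      (hc.const_mul ((T : ℂ) * (Real.pi : ℂ))))).div_const
        ((Real.pi : ℂ) ^ 2 - (T : ℂ) ^ 2 * w ^ 2)
    refine hF.congr_deriv ?_
    simp only [Pi.sub_apply, id_eq]
    rw [div_eq_iff hD]
    push_cast
    generalize Complex.sin (Real.pi * t / T) = S
    generalize Complex.cos (Real.pi * t / T) = C
    generalize Complex.exp (Complex.I * w * (t : ℂ)) = E
    field_simp
    linear_combination (E * w ^ 2 * (T : ℂ) ^ 2 * S) * Complex.I_sq
  rw [intervalIntegral.integral_eq_sub_of_hasDerivAt hderiv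
    (by apply Continuous.intervalIntegrable; fun_prop)]
  rw [mul_div_assoc Real.pi T T, div_self hT.ne']
  simp only [Kker, mul_one, Real.sin_pi, Real.cos_pi, mul_zero, zero_div, Real.sin_zero,
    Real.cos_zero, Complex.ofReal_zero, Complex.exp_zero, Complex.ofReal_neg, Complex.ofReal_one]
  field_simp
  ring

/-- The polarization identity for real parts, applied to two exponentials and weighted by a real
factor `s`. -/
lemma re_mul_re_cexp (s t : ℝ) (z₁ z₂ w₁ w₂ : ℂ) :
    s * (z₁ * Complex.exp (Complex.I * w₁ * (t : ℂ))).re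
        * (z₂ * Complex.exp (Complex.I * w₂ * (t : ℂ))).re
      = (1 / 2) * (z₁ * z₂ * ((s : ℂ) * Complex.exp (Complex.I * (w₁ + w₂) * (t : ℂ)))
          + z₁ * starRingEnd ℂ z₂
            * ((s : ℂ) * Complex.exp (Complex.I * (w₁ - starRingEnd ℂ w₂) * (t : ℂ)))).re := by
  have key : ∀ a b : ℂ, s * a.re * b.re
      = (1 / 2) * ((s : ℂ) * (a * b + a * starRingEnd ℂ b)).re := by
    intro a b
    rw [Complex.re_ofReal_mul]
    simp only [Complex.add_re, Complex.mul_re, Complex.conj_re,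
      Complex.conj_im]
    ring
  have e1 : Complex.exp (Complex.I * (w₁ + w₂) * (t : ℂ))
      = Complex.exp (Complex.I * w₁ * (t : ℂ)) * Complex.exp (Complex.I * w₂ * (t : ℂ)) := by
    rw [← Complex.exp_add]; ring_nf
  have e2 : Complex.exp (Complex.I * (w₁ - starRingEnd ℂ w₂) * (t : ℂ))
      = Complex.exp (Complex.I * w₁ * (t : ℂ))
        * starRingEnd ℂ (Complex.exp (Complex.I * w₂ * (t : ℂ))) := by
    rw [← Complex.exp_conj, ← Complex.exp_add]
    simp only [map_mul, Complex.conj_I, Complex.conj_ofReal]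
    ring_nf
  rw [key, e1, e2, map_mul]
  ring_nf

/-- For `T > 0` and `z₁, z₂, w₁, w₂ ∈ ℂ` avoiding the poles of `K`,
`∫_0^T sin(πt/T) Re(z₁ e^{iw₁t}) Re(z₂ e^{iw₂t}) dt
  = ½ Re( z₁z₂ (1+e^{i(w₁+w₂)T}) K(w₁+w₂)
        + z₁ conj(z₂) (1+e^{i(w₁-conj w₂)T}) K(w₁-conj w₂) )`. -/
theorem stmt_5 (T : ℝ) (hT : 0 < T) (z₁ z₂ w₁ w₂ : ℂ)
    (h1 : (T : ℂ) ^ 2 * (w₁ + w₂) ^ 2 ≠ (Real.pi : ℂ) ^ 2)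
    (h2 : (T : ℂ) ^ 2 * (w₁ - starRingEnd ℂ w₂) ^ 2 ≠ (Real.pi : ℂ) ^ 2) :
    (∫ t in (0:ℝ)..T, Real.sin (Real.pi * t / T)
        * (z₁ * Complex.exp (Complex.I * w₁ * (t : ℂ))).re
        * (z₂ * Complex.exp (Complex.I * w₂ * (t : ℂ))).re)
      = (1 / 2) *
          (z₁ * z₂ * (1 + Complex.exp (Complex.I * (w₁ + w₂) * (T : ℂ)))
              * Kker T (w₁ + w₂)
            + z₁ * starRingEnd ℂ z₂
              * (1 + Complex.exp (Complex.I * (w₁ - starRingEnd ℂ w₂) * (T : ℂ)))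
              * Kker T (w₁ - starRingEnd ℂ w₂)).re := by
  simp only [re_mul_re_cexp]
  have hi : ∀ c w : ℂ, IntervalIntegrable (fun t : ℝ => c * ((Real.sin (Real.pi * t / T) : ℂ)
      * Complex.exp (Complex.I * w * (t : ℂ)))) volume 0 T := by
    intro c w
    apply Continuous.intervalIntegrable
    fun_prop
  have hre := Complex.reCLM.intervalIntegral_comp_comm
    ((hi (z₁ * z₂) (w₁ + w₂)).add (hi (z₁ * starRingEnd ℂ z₂) (w₁ - starRingEnd ℂ w₂)))
  simp only [Complex.reCLM_apply] at hre
  rw [intervalIntegral.integral_const_mul, hre, intervalIntegral.integral_add (hi _ _) (hi _ _),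
    intervalIntegral.integral_const_mul, intervalIntegral.integral_const_mul,
    integral_sin_mul_cexp T hT _ h1, integral_sin_mul_cexp T hT _ h2]
  simp only [mul_assoc]
end
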